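/- Let f : ℝ^N → (−∞,∞], x̄ ∈ dom f, let h : ℝ^N → ℝ be convex and differentiable, and let m : ℝ^N → (−∞,∞] satisfy the global model error bound |f(x) − m(x)| ≤ L·D_h(x, x̄) for all x ∈ ℝ^N, where L > 0. Let α > 0 and suppose ŷ ∈ ℝ^N satisfies m(ŷ) + (1/α)·D_h(ŷ, x̄) ≤ f(x̄) (i.e. Δ(ŷ, x̄) ≤ 0). Then the descent estimate ((1 − αL)/α)·D_h(ŷ, x̄) ≤ f(x̄) − f(ŷ) holds; in particular, for α ∈ (0, 1/L) the left-hand side is nonnegative, and strictly positive whenever D_h(ŷ, x̄) > 0. -/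

import Mathlib

open scoped RealInnerProductSpace
open Filter Topology

/-- The Bregman distance `D_h(x, u) = h x − h u − ⟨∇h u, x − u⟩` associated with `h`. -/
noncomputable def breg {N : ℕ} (h : EuclideanSpace ℝ (Fin N) → ℝ)
    (x u : EuclideanSpace ℝ (Fin N)) : ℝ :=
  h x - h u - ⟪gradient h u, x - u⟫

/-!
The model bound gives `f ŷ ≤ m ŷ + L·D` with `D = D_h(ŷ, x̄)`, and the decrease condition gives
`m ŷ + D/α ≤ f x̄`; subtracting, `f x̄ - f ŷ ≥ (1/α - L)·D`. The subtraction is legitimate in the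
extended reals because `m ŷ` is squeezed to a finite value. The sign of the left-hand side is that
of `1/α - L`, since the graph of a convex function lies above its tangent hyperplanes, i.e. `D ≥ 0`.
-/

section NormedSpace

variable {E : Type*} [NormedAddCommGroup E] [NormedSpace ℝ E] {s : Set E} {h : E → ℝ} {x y : E}

/-- The Bregman distance `D_h(x, u)` on a real normed space, where no inner product identifies the
derivative of `h` at `u` with a gradient vector; it is used to state the descent property beyond
Euclidean spaces. It is meaningful only if `h` is differentiable at `u`, as `fderiv` is `0`
otherwise. -/
noncomputable def bregmanDist (h : E → ℝ) (x u : E) : ℝ :=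
  h x - h u - fderiv ℝ h u (x - u)

theorem hasFDerivWithinAt_apply_sub_le_sub_of_convexOn {h' : E →L[ℝ] ℝ} (hconv : ConvexOn ℝ s h)
    (hx : x ∈ s) (hy : y ∈ s) (hderiv : HasFDerivWithinAt h h' s x) :
    h' (y - x) ≤ h y - h x := by
  let γ : ℝ →ᵃ[ℝ] E := AffineMap.lineMap x y
  have hγ₀ : γ 0 = x := AffineMap.lineMap_apply_zero x y
  have hγ₁ : γ 1 = y := AffineMap.lineMap_apply_one x y
  have hconv_line : ConvexOn ℝ (γ ⁻¹' s) (h ∘ γ) := hconv.comp_affineMap γ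
  have hderiv_line : HasDerivWithinAt (h ∘ γ) (h' (y - x)) (γ ⁻¹' s) 0 :=
    hderiv.comp_hasDerivWithinAt_of_eq 0 AffineMap.hasDerivWithinAt_lineMap
      (Set.mapsTo_preimage γ s) hγ₀.symm
  have hslope : h' (y - x) ≤ slope (h ∘ γ) 0 1 :=
    hconv_line.le_slope_of_hasDerivWithinAt (by simpa only [Set.mem_preimage, hγ₀] using hx)
      (by simpa only [Set.mem_preimage, hγ₁] using hy) one_pos hderiv_line
  simpa only [slope_def_field, Function.comp_apply, hγ₀, hγ₁, sub_zero, div_one] using hslope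

theorem bregmanDist_nonneg (hconv : ConvexOn ℝ s h) (hx : x ∈ s) (hy : y ∈ s)
    (hdiff : DifferentiableAt ℝ h x) : 0 ≤ bregmanDist h y x :=
  sub_nonneg.2 <| hasFDerivWithinAt_apply_sub_le_sub_of_convexOn hconv hx hy
    hdiff.hasFDerivAt.hasFDerivWithinAt

end NormedSpace

theorem breg_eq_bregmanDist {N : ℕ} (h : EuclideanSpace ℝ (Fin N) → ℝ)
    (x u : EuclideanSpace ℝ (Fin N)) : breg h x u = bregmanDist h x u := by
  rw [breg, bregmanDist, ← toDual_gradient, InnerProductSpace.toDual_apply_apply]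

theorem coe_sub_le_sub_of_sub_le_of_add_le {a b c : EReal} {r t : ℝ} (ha : a ≠ ⊤) (hc : c ≠ ⊥)
    (hbc : b - c ≤ r) (hca : c + t ≤ a) : ((t - r : ℝ) : EReal) ≤ a - b := by
  have hc_top : c ≠ ⊤ := by
    rintro rfl
    exact ha (top_le_iff.1 (EReal.top_add_coe t ▸ hca))
  lift c to ℝ using ⟨hc_top, hc⟩
  have hb : b ≤ r + c :=
    (EReal.sub_le_iff_le_add (.inl (EReal.coe_ne_bot c)) (.inl (EReal.coe_ne_top c))).1 hbc
  calc ((t - r : ℝ) : EReal) = (c + t) - (r + c) := by norm_cast; ring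
    _ ≤ a - b := EReal.sub_le_sub hca hb

theorem descent_property_global_model_general {E : Type*} [NormedAddCommGroup E] [NormedSpace ℝ E]
    {s : Set E} {f m : E → EReal} {h : E → ℝ} {x y : E} {L α : ℝ}
    (hconv : ConvexOn ℝ s h) (hx : x ∈ s) (hy : y ∈ s) (hdiff : DifferentiableAt ℝ h x)
    (hfx : f x ≠ ⊤) (hmy : m y ≠ ⊥) (hα : 0 < α)
    (hmodel : f y - m y ≤ ((L * bregmanDist h y x : ℝ) : EReal))
    (hdecrease : m y + ((1 / α * bregmanDist h y x : ℝ) : EReal) ≤ f x) :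
    (((1 - α * L) / α * bregmanDist h y x : ℝ) : EReal) ≤ f x - f y ∧
      (α * L < 1 →
        0 ≤ (1 - α * L) / α * bregmanDist h y x ∧
        (0 < bregmanDist h y x → 0 < (1 - α * L) / α * bregmanDist h y x)) := by
  refine ⟨?_, fun hαL ↦ ?_⟩
  · have hcoeff : (1 - α * L) / α * bregmanDist h y x =
        1 / α * bregmanDist h y x - L * bregmanDist h y x := by
      field_simp
    rw [hcoeff]
    exact coe_sub_le_sub_of_sub_le_of_add_le hfx hmy hmodel hdecrease
  · have hcoeff_pos : 0 < (1 - α * L) / α := div_pos (sub_pos.2 hαL) hα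
    exact ⟨mul_nonneg hcoeff_pos.le (bregmanDist_nonneg hconv hx hy hdiff), mul_pos hcoeff_pos⟩

/-- **Descent property under a global model error bound (inexact points).** If
`|f − m| ≤ L·D_h(·, x̄)` and `ŷ` satisfies `m ŷ + (1/α)·D_h(ŷ, x̄) ≤ f x̄`, then
`((1 − αL)/α)·D_h(ŷ, x̄) ≤ f x̄ − f ŷ`; in particular the left-hand side is nonnegative
for `α ∈ (0, 1/L)`, and strictly positive whenever `D_h(ŷ, x̄) > 0`. -/
theorem descent_property_global_model (N : ℕ)
    (f : EuclideanSpace ℝ (Fin N) → EReal) (hfbot : ∀ z, f z ≠ ⊥)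
    (xb : EuclideanSpace ℝ (Fin N)) (hxb : f xb ≠ ⊤)
    (h : EuclideanSpace ℝ (Fin N) → ℝ)
    (hhconv : ConvexOn ℝ Set.univ h) (hhdiff : Differentiable ℝ h)
    (m : EuclideanSpace ℝ (Fin N) → EReal) (hmbot : ∀ z, m z ≠ ⊥)
    (L : ℝ) (hL : 0 < L)
    (hmodel : ∀ z, f z - m z ≤ ((L * breg h z xb : ℝ) : EReal) ∧
                   m z - f z ≤ ((L * breg h z xb : ℝ) : EReal))
    (α : ℝ) (hα : 0 < α)
    (yh : EuclideanSpace ℝ (Fin N))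
    (hdecrease : m yh + (((1/α) * breg h yh xb : ℝ) : EReal) ≤ f xb) :
    ((((1 - α * L) / α) * breg h yh xb : ℝ) : EReal) ≤ f xb - f yh ∧
      (α < 1 / L →
        0 ≤ ((1 - α * L) / α) * breg h yh xb ∧
        (0 < breg h yh xb → 0 < ((1 - α * L) / α) * breg h yh xb)) := by
  simp only [breg_eq_bregmanDist, lt_div_iff₀ hL] at hmodel hdecrease ⊢
  exact descent_property_global_model_general hhconv (Set.mem_univ xb) (Set.mem_univ yh)
    (hhdiff xb) hxb (hmbot yh) hα (hmodel yh).1 hdecrease
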